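/- Let Σ be a set and (α, γ) a Galois insertion of a complete lattice 𝒜 into the dual lattice of Moore families on Σ. Then for every a ∈ 𝒜, every finitary operation f on ℘(Σ) of arity n, and every tuple S⃗ ∈ γ(a)^n: α(M(γ(a) ∪ {f(S⃗)})) < a if and only if f(S⃗) ∉ γ(a). Consequently, the abstract refiners of a coincide with the concrete refiners of the Moore family γ(a). -/

import Mathlib

universe u v

variable {X : Type u} {A : Type v}

/-- A Moore family: a collection of subsets closed under arbitrary intersections. -/
def IsMoore (M : Set (Set X)) : Prop := ∀ S ⊆ M, ⋂₀ S ∈ M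

/-- The least Moore family containing `C`. -/
def mClose (C : Set (Set X)) : Set (Set X) := ⋂₀ {M | IsMoore M ∧ C ⊆ M}

/-- A disjunctive Moore family: additionally closed under arbitrary unions. -/
def IsDisjMoore (M : Set (Set X)) : Prop := IsMoore M ∧ ∀ S ⊆ M, ⋃₀ S ∈ M

/-- The least disjunctive Moore family containing `C`. -/
def dClose (C : Set (Set X)) : Set (Set X) := ⋂₀ {M | IsDisjMoore M ∧ C ⊆ M}

/-- The closure operator associated with a Moore family. -/
def mu (M : Set (Set X)) (S : Set X) : Set X := ⋂₀ {T | T ∈ M ∧ S ⊆ T}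

/-- The partition (as a setoid) induced by a Moore family:
`s ≡ s'` iff `μ {s} = μ {s'}`. -/
def prS (M : Set (Set X)) : Setoid X :=
  ⟨fun s t => mu M {s} = mu M {t}, ⟨fun _ => rfl, Eq.symm, Eq.trans⟩⟩

/-- The Moore family of all `P`-saturated sets (unions of blocks of `P`). -/
def padS (P : Setoid X) : Set (Set X) := {S | ∀ s ∈ S, ∀ t, P.r s t → t ∈ S}

/-- `P` refines `Q`: every block of `P` is contained in a block of `Q`. -/
def refines (P Q : Setoid X) : Prop := ∀ s t, P.r s t → Q.r s t

/-- A finitary operation on `℘(X)`: an arity `n` together with a map `℘(X)^n → ℘(X)`. -/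
abbrev Op (X : Type u) := (n : ℕ) × ((Fin n → Set X) → Set X)

/-- The image `F(S)` of a set of operations on a collection of subsets. -/
def imageF (F : Set (Op X)) (S : Set (Set X)) : Set (Set X) :=
  {T | ∃ f ∈ F, ∃ args : Fin f.1 → Set X, (∀ i, args i ∈ S) ∧ T = f.2 args}

/-- Forward `F`-completeness: `F(S) ⊆ S`. -/
def FComplete (F : Set (Op X)) (S : Set (Set X)) : Prop := imageF F S ⊆ S

/-- The forward `F`-complete shell: the least forward `F`-complete Moore family
containing `M`. -/
def shellF (F : Set (Op X)) (M : Set (Set X)) : Set (Set X) :=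
  ⋂₀ {B | IsMoore B ∧ FComplete F B ∧ M ⊆ B}

/-- Predecessor operator of a transition relation. -/
def preR (r : X → X → Prop) (S : Set X) : Set X := {s | ∃ t ∈ S, r s t}

/-- The split of a partition `P` by a set `T`: blocks are the nonempty sets
among `B ∩ T` and `B \ T` for blocks `B` of `P`. -/
def splitS (T : Set X) (P : Setoid X) : Setoid X :=
  ⟨fun s t => P.r s t ∧ (s ∈ T ↔ t ∈ T),
   ⟨fun s => ⟨P.iseqv.refl s, Iff.rfl⟩,
    fun h => ⟨P.iseqv.symm h.1, h.2.symm⟩,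
    fun h1 h2 => ⟨P.iseqv.trans h1.1 h2.1, h1.2.trans h2.2⟩⟩⟩

/-- Abstract refinement: `refine_f^A(S, a) = α(M(γ(a) ∪ {f(S)}))`. -/
def refineA [Preorder A] (al : Set (Set X) → A) (ga : A → Set (Set X))
    (f : Op X) (S : Fin f.1 → Set X) (a : A) : A :=
  al (mClose (ga a ∪ {f.2 S}))

/-- Abstract refiners: tuples in `γ(a)^n` whose refinement is strictly below `a`. -/
def refinersA [Preorder A] (al : Set (Set X) → A) (ga : A → Set (Set X))
    (f : Op X) (a : A) : Set (Fin f.1 → Set X) :=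
  {S | (∀ i, S i ∈ ga a) ∧ refineA al ga f S a < a}

/-- One step of the GPT algorithm: refine by some refiner of some `f ∈ F`. -/
def StepA [Preorder A] (F : Set (Op X)) (al : Set (Set X) → A) (ga : A → Set (Set X))
    (a b : A) : Prop :=
  ∃ f ∈ F, ∃ S : Fin f.1 → Set X, S ∈ refinersA al ga f a ∧ b = refineA al ga f S a

/-- The setoid induced by a collection of sets: `s ≡ t` iff no set of the
collection separates them. -/
def indSetoid (C : Set (Set X)) : Setoid X :=
  ⟨fun s t => ∀ T ∈ C, (s ∈ T ↔ t ∈ T),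
   ⟨fun _ _ _ => Iff.rfl, fun h T hT => (h T hT).symm,
    fun h1 h2 T hT => (h1 T hT).trans (h2 T hT)⟩⟩

/-- The block of `P` containing `s`. -/
def blockOf (P : Setoid X) (s : X) : Set X := {t | P.r s t}

/-- The existential-until operator `EU(S₁, S₂)`. -/
def EUset (r : X → X → Prop) (S1 S2 : Set X) : Set X :=
  S2 ∪ {s | s ∈ S1 ∧ ∃ (n : ℕ) (p : ℕ → X), p 0 = s ∧
    (∀ i < n, p i ∈ S1 ∧ r (p i) (p (i+1))) ∧ p n ∈ S2}

/-! Once Moore families are ordered by inclusion and `𝒜` by the reverse of its order, `(α, γ)` is a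
Galois insertion in the usual sense. For a family `M` containing `γ(a)`, the inequality `α(M) ≤ a`
is then automatic, and adjointness turns the failure of `a ≤ α(M)` into the failure of `M ⊆ γ(a)`:
the abstraction drops strictly below `a` exactly when the concrete family strictly grows.
Adjoining a set to a Moore family makes it grow exactly when that set was missing. -/

theorem lt_l_iff_u_lt_of_u_le {α β : Type*} [Preorder α] [Preorder β] {l : α → β} {u : β → α}
    (gi : GaloisInsertion l u) {x : α} {b : β} (h : u b ≤ x) : b < l x ↔ u b < x := by
  have hb : b ≤ l x := (gi.le_l_u b).trans (gi.gc.monotone_l h)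
  rw [lt_iff_le_not_ge, lt_iff_le_not_ge, gi.gc.le_iff_le, and_iff_right hb, and_iff_right h]

theorem isMoore_sInter {F : Set (Set (Set X))} (h : ∀ M ∈ F, IsMoore M) : IsMoore (⋂₀ F) :=
  fun S hS M hM => h M hM S (hS.trans (Set.sInter_subset_of_mem hM))

theorem isMoore_mClose (C : Set (Set X)) : IsMoore (mClose C) :=
  isMoore_sInter fun _ hM => hM.1

theorem subset_mClose (C : Set (Set X)) : C ⊆ mClose C :=
  Set.subset_sInter fun _ hM => hM.2

theorem mClose_subset_iff {C M : Set (Set X)} (hM : IsMoore M) : mClose C ⊆ M ↔ C ⊆ M :=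
  ⟨(subset_mClose C).trans, fun h => Set.sInter_subset_of_mem ⟨hM, h⟩⟩

theorem subset_mClose_union_left (C D : Set (Set X)) : C ⊆ mClose (C ∪ D) :=
  Set.subset_union_left.trans (subset_mClose _)

theorem ssubset_mClose_union_iff {M C : Set (Set X)} (hM : IsMoore M) :
    M ⊂ mClose (M ∪ C) ↔ ¬C ⊆ M := by
  rw [ssubset_iff_subset_not_subset, and_iff_right (subset_mClose_union_left M C),
    mClose_subset_iff hM, Set.union_subset_iff, and_iff_right subset_rfl]

/-- The Moore families on `X`, ordered by inclusion. -/
abbrev MooreFamily (X : Type u) := {M : Set (Set X) // IsMoore M}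

section Abstraction

variable [Preorder A] {al : Set (Set X) → A} {ga : A → Set (Set X)}

/-- The pair `(α, γ)` as a Galois insertion in Mathlib's sense. The order is reversed on `A` rather
than on Moore families, which keeps `α` as the lower and `γ` as the upper adjoint. -/
def mooreGaloisInsertion (hga : ∀ a, IsMoore (ga a))
    (hadj : ∀ M, IsMoore M → ∀ a, a ≤ al M ↔ M ⊆ ga a) (hins : ∀ a, al (ga a) ≤ a) :
    GaloisInsertion (fun M : MooreFamily X => OrderDual.toDual (al M))
      (fun a : Aᵒᵈ => (⟨ga (OrderDual.ofDual a), hga _⟩ : MooreFamily X)) :=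
  GaloisConnection.toGaloisInsertion (fun M a => hadj M M.2 (OrderDual.ofDual a))
    fun a => hins (OrderDual.ofDual a)

theorem abstraction_lt_iff_ssubset (hga : ∀ a, IsMoore (ga a))
    (hadj : ∀ M, IsMoore M → ∀ a, a ≤ al M ↔ M ⊆ ga a) (hins : ∀ a, al (ga a) ≤ a)
    {M : Set (Set X)} (hM : IsMoore M) {a : A} (h : ga a ⊆ M) : al M < a ↔ ga a ⊂ M :=
  lt_l_iff_u_lt_of_u_le (mooreGaloisInsertion hga hadj hins) (x := ⟨M, hM⟩)
    (b := OrderDual.toDual a) h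

end Abstraction

theorem stmt8_general [Preorder A]
    (al : Set (Set X) → A) (ga : A → Set (Set X))
    (hga : ∀ a : A, IsMoore (ga a))
    (hadj : ∀ M : Set (Set X), IsMoore M → ∀ a : A, a ≤ al M ↔ M ⊆ ga a)
    (hins : ∀ a : A, al (ga a) ≤ a)
    (a : A) (f : Op X) :
    (∀ S : Fin f.1 → Set X, al (mClose (ga a ∪ {f.2 S})) < a ↔ f.2 S ∉ ga a) ∧
    refinersA al ga f a =
      {S : Fin f.1 → Set X | (∀ i, S i ∈ ga a) ∧ ga a ⊂ mClose (ga a ∪ {f.2 S})} := by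
  have lt_iff_ssubset (S : Fin f.1 → Set X) :
      al (mClose (ga a ∪ {f.2 S})) < a ↔ ga a ⊂ mClose (ga a ∪ {f.2 S}) :=
    abstraction_lt_iff_ssubset hga hadj hins (isMoore_mClose _) (subset_mClose_union_left _ _)
  refine ⟨fun S => ?_, Set.ext fun S => and_congr_right fun _ => lt_iff_ssubset S⟩
  rw [lt_iff_ssubset, ssubset_mClose_union_iff (hga a), Set.singleton_subset_iff]

theorem stmt8 [CompleteLattice A]
    (al : Set (Set X) → A) (ga : A → Set (Set X))
    (hga : ∀ a : A, IsMoore (ga a))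
    (hadj : ∀ M : Set (Set X), IsMoore M → ∀ a : A, a ≤ al M ↔ M ⊆ ga a)
    (hins : ∀ a : A, al (ga a) = a)
    (a : A) (f : Op X) :
    (∀ S : Fin f.1 → Set X, (∀ i, S i ∈ ga a) →
      (al (mClose (ga a ∪ {f.2 S})) < a ↔ f.2 S ∉ ga a)) ∧
    refinersA al ga f a =
      {S : Fin f.1 → Set X | (∀ i, S i ∈ ga a) ∧ ga a ⊂ mClose (ga a ∪ {f.2 S})} := by
  obtain ⟨lt_iff_notMem, refiners_eq⟩ := stmt8_general al ga hga hadj (fun b => (hins b).le) a f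
  exact ⟨fun S _ => lt_iff_notMem S, refiners_eq⟩
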